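/- There exists a constant C = C(n) such that for every 1 ≤ p ≤ ∞, every f ∈ W^{1,p}(ℝⁿ), every α ∈ (0,∞), and all distinct points x, y ∈ ℝⁿ with M|∇f|(x) ≤ α and M|∇f|(y) ≤ α, setting r := |x − y|, one has |f_{B(x,r)} − f_{B(y,r)}| ≤ C r α, where f_{B(z,r)} := ⨍_{B(z,r)} f. -/

import Mathlib

open MeasureTheory Filter Metric Set
open scoped ENNReal NNReal Topology

noncomputable section

abbrev Euc (n : ℕ) := EuclideanSpace ℝ (Fin n)

/-- Degree of a multi-index. -/
def mdeg {n : ℕ} (α : Fin n → ℕ) : ℕ := ∑ i, α i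

/-- Iterated partial derivative along a list of coordinate directions. -/
def listDeriv {n : ℕ} : List (Fin n) → (Euc n → ℝ) → (Euc n → ℝ)
  | [], η => η
  | i :: l, η => fun x => fderiv ℝ (listDeriv l η) x (EuclideanSpace.single i 1)

/-- The partial derivative `D^α η` associated to a multi-index `α`. -/
def mderiv {n : ℕ} (α : Fin n → ℕ) (η : Euc n → ℝ) : Euc n → ℝ :=
  listDeriv ((List.finRange n).flatMap fun i => List.replicate (α i) i) η

/-- `g` is the weak derivative `D^α f` on `ℝⁿ`. -/
def IsWeakDeriv {n : ℕ} (α : Fin n → ℕ) (f g : Euc n → ℝ) : Prop :=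
  ∀ η : Euc n → ℝ, ContDiff ℝ (⊤ : ℕ∞) η → HasCompactSupport η →
    ∫ x, f x * mderiv α η x = (-1 : ℝ) ^ mdeg α * ∫ x, g x * η x

/-- `g` is the weak derivative `D^α f` on an open set `U`. -/
def IsWeakDerivOn {n : ℕ} (U : Set (Euc n)) (α : Fin n → ℕ) (f g : Euc n → ℝ) : Prop :=
  ∀ η : Euc n → ℝ, ContDiff ℝ (⊤ : ℕ∞) η → HasCompactSupport η → tsupport η ⊆ U →
    ∫ x in U, f x * mderiv α η x = (-1 : ℝ) ^ mdeg α * ∫ x in U, g x * η x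

/-- Membership in the Sobolev space `W^{k,p}(U)`. -/
def MemSobolevOn {n : ℕ} (k : ℕ) (p : ℝ) (U : Set (Euc n)) (f : Euc n → ℝ) : Prop :=
  MemLp f (ENNReal.ofReal p) (volume.restrict U) ∧
  ∀ α : Fin n → ℕ, mdeg α ≤ k → ∃ g : Euc n → ℝ,
    MemLp g (ENNReal.ofReal p) (volume.restrict U) ∧ IsWeakDerivOn U α f g

/-- Membership in the local Sobolev space `W^{k,p}_loc(Ω)`. -/
def MemSobolevLoc {n : ℕ} (k : ℕ) (p : ℝ) (Ω : Set (Euc n)) (f : Euc n → ℝ) : Prop :=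
  ∀ U : Set (Euc n), IsOpen U → Bornology.IsBounded U → closure U ⊆ Ω →
    MemSobolevOn k p U f

/-- The normalizing constant `γ(a)` of the Riesz kernel. -/
def rieszGamma (n : ℕ) (a : ℝ) : ℝ :=
  Real.pi ^ ((n : ℝ) / 2) * (2 : ℝ) ^ a * Real.Gamma (a / 2) / Real.Gamma (((n : ℝ) - a) / 2)

/-- The Riesz potential `I_a * g`, valued in `ℝ≥0∞`. -/
def rieszPot {n : ℕ} (a : ℝ) (g : Euc n → ℝ) (x : Euc n) : ℝ≥0∞ :=
  (ENNReal.ofReal (rieszGamma n a))⁻¹ *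
    ∫⁻ y, ENNReal.ofReal (g y) * ENNReal.ofReal (‖x - y‖ ^ (a - (n : ℝ)))

/-- The Riesz capacity `R_{a,p}`. -/
def rieszCap {n : ℕ} (a p : ℝ) (S : Set (Euc n)) : ℝ≥0∞ :=
  ⨅ (g : Euc n → ℝ) (_ : MemLp g (ENNReal.ofReal p) volume ∧ (∀ x, 0 ≤ g x) ∧
      ∀ x ∈ S, 1 ≤ rieszPot a g x),
    ∫⁻ y, ENNReal.ofReal (g y) ^ p

/-- The precise representative of a (vector-valued) locally integrable function. -/
def preciseRepV {n : ℕ} {F : Type*} [NormedAddCommGroup F] [NormedSpace ℝ F]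
    (f : Euc n → F) (x : Euc n) : F :=
  letI := Classical.propDecidable
  if h : ∃ L : F, Tendsto (fun ε : ℝ => ⨍ y in ball x ε, f y) (𝓝[>] (0:ℝ)) (𝓝 L)
  then h.choose else 0

/-- The precise representative of a real-valued locally integrable function. -/
def preciseRep {n : ℕ} (f : Euc n → ℝ) (x : Euc n) : ℝ := preciseRepV f x

/-- The Hardy–Littlewood maximal function (of an `ℝ≥0∞`-valued integrand). -/
def maxFn {n : ℕ} (g : Euc n → ℝ≥0∞) (x : Euc n) : ℝ≥0∞ :=
  ⨆ (r : ℝ) (_ : 0 < r), (volume (ball x r))⁻¹ * ∫⁻ y in ball x r, g y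

/-- `x` is a density point of `S`. -/
def DensityPt {n : ℕ} (S : Set (Euc n)) (x : Euc n) : Prop :=
  Tendsto (fun r : ℝ => volume (S ∩ ball x r) / volume (ball x r)) (𝓝[>] (0:ℝ)) (𝓝 1)

/-- `L` is the approximate differential of `φ` at `x₀`, relative to the domain `A`. -/
def HasApproxDerivAt {n : ℕ} (A : Set (Euc n)) (φ : Euc n → Euc n)
    (L : Euc n →L[ℝ] Euc n) (x₀ : Euc n) : Prop :=
  DensityPt A x₀ ∧ ∀ ε : ℝ, 0 < ε →
    DensityPt {x | x ∈ A ∧ ‖φ x - φ x₀ - L (x - x₀)‖ ≤ ε * ‖x - x₀‖} x₀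

end

/-- `g` is the weak gradient of `f`. -/
def IsWeakGradient {n : ℕ} (f : Euc n → ℝ) (g : Euc n → Euc n) : Prop :=
  ∀ i : Fin n, IsWeakDeriv (Pi.single i 1) f
    (fun x => (inner ℝ (g x) (EuclideanSpace.single i 1) : ℝ))

/-! Mollify `f` by a bump function `φ` with support in `ball 0 r`. The convolution `f ⋆ φ` has
derivative `f' ⋆ φ`, so the mean value inequality on `closedBall x (dist x y)` bounds
`‖(f ⋆ φ) x - (f ⋆ φ) y‖` by `dist x y` times the integral of `‖f'‖` over `ball x (r + dist x y)`.
Letting `φ` increase to the indicator of `ball 0 r` turns the convolutions into the integrals of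
`f` over `ball x r` and `ball y r`. This direct comparison of the two balls replaces the Poincaré
inequality on a smaller ball inside their intersection. -/

open scoped Convolution
open ContinuousLinearMap

theorem integrableOn_ball_of_locallyIntegrable {X F : Type*} [PseudoMetricSpace X] [ProperSpace X]
    [MeasurableSpace X] [NormedAddCommGroup F] {μ : Measure X} {f : X → F}
    (hf : LocallyIntegrable f μ) (x : X) (r : ℝ) : IntegrableOn f (ball x r) μ :=
  (hf.integrableOn_isCompact (isCompact_closedBall x r)).mono_set ball_subset_closedBall

theorem locallyIntegrable_innerSL {𝕜 X H : Type*} [RCLike 𝕜] [TopologicalSpace X]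
    [SecondCountableTopology X] [MeasurableSpace X] [NormedAddCommGroup H] [InnerProductSpace 𝕜 H]
    {μ : Measure X} {u : X → H} (hu : LocallyIntegrable u μ) :
    LocallyIntegrable (fun x ↦ innerSL 𝕜 (u x)) μ :=
  hu.mono ((innerSL 𝕜).continuous.comp_aestronglyMeasurable hu.aestronglyMeasurable)
    (.of_forall fun x ↦ (innerSL_apply_norm 𝕜 (u x)).le)

theorem addHaar_real_ball_mul {E : Type*} [NormedAddCommGroup E] [NormedSpace ℝ E]
    [MeasurableSpace E] [BorelSpace E] [FiniteDimensional ℝ E] (μ : Measure E)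
    [μ.IsAddHaarMeasure] (x : E) {s : ℝ} (hs : 0 < s) (r : ℝ) :
    μ.real (ball x (s * r)) = s ^ Module.finrank ℝ E * μ.real (ball x r) := by
  rw [Measure.addHaar_real_ball_center μ x r, Measure.real, Measure.addHaar_ball_mul_of_pos μ x hs,
    ENNReal.toReal_mul, ENNReal.toReal_ofReal (by positivity), Measure.real]

theorem fderiv_comp_const_sub {𝕜 E F : Type*} [NontriviallyNormedField 𝕜] [NormedAddCommGroup E]
    [NormedSpace 𝕜 E] [NormedAddCommGroup F] [NormedSpace 𝕜 F] (f : E → F) (c x : E) :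
    fderiv 𝕜 (fun z ↦ f (c - z)) x = -fderiv 𝕜 f (c - x) := by
  ext v
  have h := (ContinuousLinearEquiv.neg 𝕜 : E ≃L[𝕜] E).comp_right_fderiv
    (f := fun z ↦ f (c + z)) (x := x)
  simpa [Function.comp_def, fderiv_comp_add_left, ← sub_eq_add_neg] using DFunLike.congr_fun h v

section ContDiffBump

variable {E F : Type*} [NormedAddCommGroup E] [NormedSpace ℝ E] [HasContDiffBump E]
  [NormedAddCommGroup F] [NormedSpace ℝ F]

theorem exists_seq_contDiffBump_rIn_tendsto {X : Type*} (c : X) {r : ℝ} (hr : 0 < r) :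
    ∃ φ : ℕ → ContDiffBump c,
      (∀ k, (φ k).rOut = r) ∧ Tendsto (fun k ↦ (φ k).rIn) atTop (𝓝 r) := by
  obtain ⟨u, -, hu_mem, hu_lim⟩ := exists_seq_strictMono_tendsto' hr
  exact ⟨fun k ↦ ⟨u k, r, (hu_mem k).1, (hu_mem k).2⟩, fun _ ↦ rfl, hu_lim⟩

theorem norm_contDiffBump_smul_le {c : E} (φ : ContDiffBump c) (x : E) (v : F) :
    ‖φ x • v‖ ≤ ‖v‖ := by
  rw [norm_smul, Real.norm_of_nonneg φ.nonneg]
  exact mul_le_of_le_one_left (norm_nonneg v) φ.le_one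

variable [MeasurableSpace E] {μ : Measure E} {f : E → F}

theorem convolution_contDiffBump_eq_setIntegral (μ : Measure E) (f : E → F)
    (φ : ContDiffBump (0 : E)) (c : E) :
    (f ⋆[(lsmul ℝ ℝ).flip, μ] φ) c = ∫ z in ball c φ.rOut, φ (c - z) • f z ∂μ := by
  refine (setIntegral_eq_integral_of_forall_compl_eq_zero fun z hz ↦ ?_).symm
  rw [φ.zero_of_le_dist, map_zero]
  rwa [dist_zero_right, ← dist_eq_norm, dist_comm, ← not_lt]

variable [FiniteDimensional ℝ E]

theorem norm_convolution_contDiffBump_le (hf : LocallyIntegrable f μ) (φ : ContDiffBump (0 : E))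
    (c : E) :
    ‖(f ⋆[(lsmul ℝ ℝ).flip, μ] φ) c‖ ≤ ∫ z in ball c φ.rOut, ‖f z‖ ∂μ := by
  rw [convolution_contDiffBump_eq_setIntegral]
  exact norm_integral_le_of_norm_le (integrableOn_ball_of_locallyIntegrable hf c φ.rOut).norm
    (.of_forall fun z ↦ norm_contDiffBump_smul_le φ (c - z) (f z))

theorem tendsto_convolution_contDiffBump [BorelSpace E] {ι : Type*} {l : Filter ι}
    [l.IsCountablyGenerated] {r : ℝ} {φ : ι → ContDiffBump (0 : E)} (hf : LocallyIntegrable f μ)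
    (hφ_out : ∀ i, (φ i).rOut = r) (hφ_in : Tendsto (fun i ↦ (φ i).rIn) l (𝓝 r)) (c : E) :
    Tendsto (fun i ↦ (f ⋆[(lsmul ℝ ℝ).flip, μ] φ i) c) l (𝓝 (∫ z in ball c r, f z ∂μ)) := by
  simp only [convolution_contDiffBump_eq_setIntegral, hφ_out]
  refine tendsto_integral_filter_of_dominated_convergence (fun z ↦ ‖f z‖) (.of_forall fun i ↦ ?_)
    (.of_forall fun i ↦ .of_forall fun z ↦ norm_contDiffBump_smul_le (φ i) (c - z) (f z))
    (integrableOn_ball_of_locallyIntegrable hf c r).norm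
    ((ae_restrict_mem measurableSet_ball).mono fun z hz ↦ ?_)
  · exact ((φ i).continuous.comp (continuous_const.sub continuous_id)).aestronglyMeasurable.smul
      hf.aestronglyMeasurable.restrict
  · refine tendsto_const_nhds.congr' ?_
    filter_upwards [hφ_in.eventually_const_lt hz] with i hi
    rw [(φ i).one_of_mem_closedBall, one_smul]
    rw [mem_closedBall_zero_iff, ← dist_eq_norm, dist_comm]
    exact hi.le

end ContDiffBump

section HasWeakFDeriv

variable {E F : Type*} [NormedAddCommGroup E] [NormedSpace ℝ E] [MeasurableSpace E]
  [NormedAddCommGroup F] [NormedSpace ℝ F] {μ : Measure E} {f : E → F} {f' : E → E →L[ℝ] F}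

/-- `f'` is the weak Fréchet derivative of `f` with respect to `μ`: the coordinate-free notion of
weak gradient, which passes to mollifications of `f` without choosing a basis. Local integrability
of `f` and `f'` is not part of the definition: the Bochner integrals are `0` where they diverge. -/
def HasWeakFDeriv (f : E → F) (f' : E → E →L[ℝ] F) (μ : Measure E) : Prop :=
  ∀ η : E → ℝ, ContDiff ℝ (⊤ : ℕ∞) η → HasCompactSupport η →
    ∫ x, (fderiv ℝ η x).smulRight (f x) ∂μ = -∫ x, η x • f' x ∂μ

variable [BorelSpace E]

theorem HasWeakFDeriv.hasFDerivAt_convolution [SFinite μ] [μ.IsAddLeftInvariant]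
    (hff' : HasWeakFDeriv f f' μ) (hf : LocallyIntegrable f μ) {η : E → ℝ}
    (hη : ContDiff ℝ (⊤ : ℕ∞) η) (hη_supp : HasCompactSupport η) (c : E) :
    HasFDerivAt (f ⋆[(lsmul ℝ ℝ).flip, μ] η) ((f' ⋆[(lsmul ℝ ℝ).flip, μ] η) c) c := by
  have hderiv := hη_supp.hasFDerivAt_convolution_right (lsmul ℝ ℝ).flip hf
    (hη.of_le (by simp)) c
  have hreflect := hff' (fun z ↦ η (c - z)) (hη.comp (contDiff_const.sub contDiff_id))
    (hη_supp.comp_homeomorph (Homeomorph.subLeft c))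
  simp only [fderiv_comp_const_sub] at hreflect
  convert hderiv using 1
  calc
    ∫ z, η (c - z) • f' z ∂μ = -∫ z, (-fderiv ℝ η (c - z)).smulRight (f z) ∂μ := by
      rw [hreflect, neg_neg]
    _ = ∫ z, (fderiv ℝ η (c - z)).smulRight (f z) ∂μ := by
      rw [← integral_neg]
      congr! with z
      ext
      simp

variable [FiniteDimensional ℝ E] [μ.IsAddHaarMeasure]

theorem HasWeakFDeriv.norm_convolution_contDiffBump_sub_le (hff' : HasWeakFDeriv f f' μ)
    (hf : LocallyIntegrable f μ) (hf' : LocallyIntegrable f' μ) (φ : ContDiffBump (0 : E))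
    (x y : E) :
    ‖(f ⋆[(lsmul ℝ ℝ).flip, μ] φ) x - (f ⋆[(lsmul ℝ ℝ).flip, μ] φ) y‖ ≤
      dist x y * ∫ z in ball x (φ.rOut + dist x y), ‖f' z‖ ∂μ := by
  rw [mul_comm, dist_eq_norm x y]
  refine (convex_closedBall x ‖x - y‖).norm_image_sub_le_of_norm_hasFDerivWithin_le
    (fun c _ ↦ (hff'.hasFDerivAt_convolution hf φ.contDiff φ.hasCompactSupport c).hasFDerivWithinAt)
    (fun c hc ↦ ?_) (by simp [dist_eq_norm, norm_sub_rev]) (mem_closedBall_self (norm_nonneg _))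
  have hball : ball c φ.rOut ⊆ ball x (φ.rOut + ‖x - y‖) :=
    ball_subset_ball' (by gcongr; exact hc)
  calc
    ‖(f' ⋆[(lsmul ℝ ℝ).flip, μ] φ) c‖ ≤ ∫ z in ball c φ.rOut, ‖f' z‖ ∂μ :=
      norm_convolution_contDiffBump_le hf' φ c
    _ ≤ ∫ z in ball x (φ.rOut + ‖x - y‖), ‖f' z‖ ∂μ :=
      setIntegral_mono_set (integrableOn_ball_of_locallyIntegrable hf' _ _).norm
        (.of_forall fun _ ↦ norm_nonneg _) hball.eventuallyLE

theorem HasWeakFDeriv.norm_setIntegral_ball_sub_le (hff' : HasWeakFDeriv f f' μ)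
    (hf : LocallyIntegrable f μ) (hf' : LocallyIntegrable f' μ) {r : ℝ} (hr : 0 < r) (x y : E) :
    ‖(∫ z in ball x r, f z ∂μ) - ∫ z in ball y r, f z ∂μ‖ ≤
      dist x y * ∫ z in ball x (r + dist x y), ‖f' z‖ ∂μ := by
  obtain ⟨φ, hφ_out, hφ_in⟩ := exists_seq_contDiffBump_rIn_tendsto (0 : E) hr
  have hlim := tendsto_convolution_contDiffBump hf hφ_out hφ_in
  refine le_of_tendsto ((hlim x).sub (hlim y)).norm (.of_forall fun k ↦ ?_)
  simpa only [hφ_out] using hff'.norm_convolution_contDiffBump_sub_le hf hf' (φ k) x y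

theorem HasWeakFDeriv.norm_setAverage_ball_sub_le (hff' : HasWeakFDeriv f f' μ)
    (hf : LocallyIntegrable f μ) (hf' : LocallyIntegrable f' μ) {r : ℝ} (hr : 0 < r) (x y : E) :
    ‖(⨍ z in ball x r, f z ∂μ) - ⨍ z in ball y r, f z ∂μ‖ ≤
      (1 + dist x y / r) ^ Module.finrank ℝ E * dist x y *
        ⨍ z in ball x (r + dist x y), ‖f' z‖ ∂μ := by
  have hvol : μ.real (ball x (r + dist x y)) =
      (1 + dist x y / r) ^ Module.finrank ℝ E * μ.real (ball x r) := by
    rw [← addHaar_real_ball_mul μ x (by positivity)]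
    congr 2
    field_simp
  have hvol_pos : 0 < μ.real (ball x r) :=
    ENNReal.toReal_pos (measure_ball_pos μ x hr).ne' measure_ball_lt_top.ne
  have hcenter : μ.real (ball y r) = μ.real (ball x r) := by
    simp only [Measure.addHaar_real_ball_center μ _ r]
  calc
    _ = (μ.real (ball x r))⁻¹ * ‖(∫ z in ball x r, f z ∂μ) - ∫ z in ball y r, f z ∂μ‖ := by
      rw [setAverage_eq, setAverage_eq, hcenter, ← smul_sub, norm_smul,
        Real.norm_of_nonneg (by positivity)]
    _ ≤ (μ.real (ball x r))⁻¹ * (dist x y * ∫ z in ball x (r + dist x y), ‖f' z‖ ∂μ) := by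
      gcongr
      exact hff'.norm_setIntegral_ball_sub_le hf hf' hr x y
    _ = _ := by
      rw [setAverage_eq, hvol, smul_eq_mul]
      field_simp

end HasWeakFDeriv

section IsWeakGradient

variable {n : ℕ} {f : Euc n → ℝ} {g : Euc n → Euc n}

theorem flatMap_replicate_single {ι : Type*} [DecidableEq ι] {l : List ι} (hl : l.Nodup) {i : ι}
    (hi : i ∈ l) : (l.flatMap fun j ↦ List.replicate ((Pi.single i 1 : ι → ℕ) j) j) = [i] := by
  have hfilter (l : List ι) :
      (l.flatMap fun j ↦ List.replicate ((Pi.single i 1 : ι → ℕ) j) j) = l.filter (· = i) := by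
    induction l with
    | nil => rfl
    | cons j l ih => by_cases h : j = i <;> simp [ih, h]
  rw [hfilter, List.filter_eq, List.count_eq_one_of_mem hl hi, List.replicate_one]

theorem mderiv_single (i : Fin n) (η : Euc n → ℝ) :
    mderiv (Pi.single i 1) η = fun x ↦ fderiv ℝ η x (EuclideanSpace.single i 1) := by
  rw [mderiv, flatMap_replicate_single (List.nodup_finRange n) (List.mem_finRange i)]
  rfl

theorem mdeg_single (i : Fin n) : mdeg (Pi.single i 1) = 1 := by
  simp [mdeg]

theorem IsWeakGradient.hasWeakFDeriv (hfg : IsWeakGradient f g) (hf : LocallyIntegrable f volume)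
    (hg : LocallyIntegrable g volume) :
    HasWeakFDeriv f (fun x ↦ innerSL ℝ (g x)) volume := by
  intro η hη hη_supp
  have hint_left : Integrable fun x ↦ (fderiv ℝ η x).smulRight (f x) := by
    refine (hf.integrable_smul_right_of_hasCompactSupport (hη.continuous_fderiv (by simp))
      (hη_supp.fderiv ℝ)).congr (.of_forall fun x ↦ ?_)
    ext
    simp [mul_comm]
  have hint_right : Integrable fun x ↦ η x • innerSL ℝ (g x) :=
    (locallyIntegrable_innerSL hg).integrable_smul_left_of_hasCompactSupport hη.continuous hη_supp
  refine ContinuousLinearMap.coe_injective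
    ((EuclideanSpace.basisFun (Fin n) ℝ).toBasis.ext fun i ↦ ?_)
  have hpartial := hfg i η hη hη_supp
  rw [mderiv_single, mdeg_single] at hpartial
  simpa [integral_apply hint_left, integral_apply hint_right, mul_comm] using hpartial

theorem setAverage_norm_le_of_maxFn_le {F : Type*} [NormedAddCommGroup F] {g : Euc n → F}
    (hg : LocallyIntegrable g volume) {α : ℝ} (hα : 0 ≤ α) {x : Euc n}
    (hx : maxFn (fun z ↦ ENNReal.ofReal ‖g z‖) x ≤ ENNReal.ofReal α) {r : ℝ} (hr : 0 < r) :
    ⨍ z in ball x r, ‖g z‖ ≤ α := by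
  have hint : IntegrableOn (fun z ↦ ‖g z‖) (ball x r) :=
    (integrableOn_ball_of_locallyIntegrable hg x r).norm
  rw [← ENNReal.ofReal_le_ofReal_iff hα,
    ofReal_setAverage hint (.of_forall fun _ ↦ norm_nonneg _), ENNReal.div_eq_inv_mul]
  exact (le_iSup₂ (f := fun (s : ℝ) (_ : 0 < s) ↦
    (volume (ball x s))⁻¹ * ∫⁻ z in ball x s, ENNReal.ofReal ‖g z‖) r hr).trans hx

end IsWeakGradient

theorem abs_average_sub_average_diff_centers_le_general {n : ℕ} {f : Euc n → ℝ}
    {g : Euc n → Euc n} (hf : LocallyIntegrable f volume) (hg : LocallyIntegrable g volume)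
    (hfg : IsWeakGradient f g) {α : ℝ} (hα : 0 ≤ α) {r : ℝ} (hr : 0 < r) {x : Euc n} (y : Euc n)
    (hx : maxFn (fun z ↦ ENNReal.ofReal ‖g z‖) x ≤ ENNReal.ofReal α) :
    |(⨍ z in ball x r, f z) - ⨍ z in ball y r, f z| ≤
      (1 + dist x y / r) ^ n * dist x y * α := by
  calc
    _ ≤ (1 + dist x y / r) ^ n * dist x y * ⨍ z in ball x (r + dist x y), ‖g z‖ := by
      simpa using (hfg.hasWeakFDeriv hf hg).norm_setAverage_ball_sub_le hf
        (locallyIntegrable_innerSL hg) hr x y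
    _ ≤ _ := by
      gcongr
      exact setAverage_norm_le_of_maxFn_le hg hα hx (by positivity)

/-- comparison of averages over balls of equal radius centered at two
points whose distance equals the radius. -/
theorem abs_average_sub_average_diff_centers_le {n : ℕ} :
    ∃ C : ℝ, 0 < C ∧
      ∀ (p : ℝ≥0∞), 1 ≤ p →
      ∀ (f : Euc n → ℝ) (g : Euc n → Euc n),
        MemLp f p volume → MemLp g p volume → IsWeakGradient f g →
      ∀ α : ℝ, 0 < α →
      ∀ x y : Euc n, x ≠ y →
        maxFn (fun z => ENNReal.ofReal ‖g z‖) x ≤ ENNReal.ofReal α →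
        maxFn (fun z => ENNReal.ofReal ‖g z‖) y ≤ ENNReal.ofReal α →
        |(⨍ z in ball x (dist x y), f z) - ⨍ z in ball y (dist x y), f z| ≤
          C * dist x y * α := by
  refine ⟨2 ^ n, by positivity, fun p hp f g hf hg hfg α hα x y hxy hx _ ↦ ?_⟩
  have h := abs_average_sub_average_diff_centers_le_general (hf.locallyIntegrable hp)
    (hg.locallyIntegrable hp) hfg hα.le (dist_pos.2 hxy) y hx
  rwa [div_self (dist_ne_zero.2 hxy), one_add_one_eq_two] at h
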